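/- Let γ: U → Mₙ(ℂ) be holomorphic (∂_{j̄}γ = 0 on U for all j) and C², let G: U → GL_{2n}(ℂ) be C², and set G̃ := (I − N(conj γ))·G·(I + N(γ)). Define the Chern curvature endomorphisms Ω_{ij̄} := −∂_{j̄}(G⁻¹·∂ᵢG) and Ω̃_{ij̄} := −∂_{j̄}(G̃⁻¹·∂ᵢG̃). Then for all i, j: Ω̃_{ij̄} = (I − N(γ))·Ω_{ij̄}·(I + N(γ)). Consequently, for any map g: U → (n×n Hermitian positive-definite matrices) with inverse entries g^{j̄i}, the traced curvatures satisfy Σ_{i,j} g^{j̄i}·Ω̃_{ij̄} = (I − N(γ))·(Σ_{i,j} g^{j̄i}·Ω_{ij̄})·(I + N(γ)). -/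

import Mathlib

open Matrix

noncomputable section

/-- The Wirtinger derivative `∂ᵢ f = ½(∂f/∂xᵢ − i·∂f/∂yᵢ)` of a function `f : ℂⁿ → ℂ`,
computed via the real Fréchet derivative. -/
def wd {n : ℕ} (i : Fin n) (f : (Fin n → ℂ) → ℂ) (z : Fin n → ℂ) : ℂ :=
  (fderiv ℝ f z (Pi.single i 1) - Complex.I * fderiv ℝ f z (Pi.single i Complex.I)) / 2

/-- The conjugate Wirtinger derivative `∂_{ī} f = ½(∂f/∂xᵢ + i·∂f/∂yᵢ)`. -/
def wdb {n : ℕ} (i : Fin n) (f : (Fin n → ℂ) → ℂ) (z : Fin n → ℂ) : ℂ :=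
  (fderiv ℝ f z (Pi.single i 1) + Complex.I * fderiv ℝ f z (Pi.single i Complex.I)) / 2

/-- Entrywise Wirtinger derivative of a matrix-valued map. -/
def wdM {n : ℕ} {ι κ : Type*} (i : Fin n) (A : (Fin n → ℂ) → Matrix ι κ ℂ)
    (z : Fin n → ℂ) : Matrix ι κ ℂ :=
  Matrix.of fun a b => wd i (fun w => A w a b) z

/-- Entrywise conjugate Wirtinger derivative of a matrix-valued map. -/
def wdbM {n : ℕ} {ι κ : Type*} (i : Fin n) (A : (Fin n → ℂ) → Matrix ι κ ℂ)
    (z : Fin n → ℂ) : Matrix ι κ ℂ :=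
  Matrix.of fun a b => wdb i (fun w => A w a b) z

open scoped ComplexOrder

/-- The block matrix `N(γ) = [[0,0],[γ,0]]`. -/
def Nmat {n : ℕ} (γ : Matrix (Fin n) (Fin n) ℂ) :
    Matrix (Fin n ⊕ Fin n) (Fin n ⊕ Fin n) ℂ :=
  Matrix.fromBlocks 0 0 γ 0

/-! A complex derivation `∂_X` along `X = u + i v` obeys the Leibniz rule. So if `∂_X P = 0`, then
`Ã = P A Q` has logarithmic derivative `Ã⁻¹ ∂_X Ã = Q⁻¹ (A⁻¹ ∂_X A) Q + Q⁻¹ ∂_X Q`. If moreover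
`∂_Y Q = 0`, then `∂_Y` kills `Q`, `Q⁻¹` and, by symmetry of second derivatives, `Q⁻¹ ∂_X Q`, so
that `∂_Y (Ã⁻¹ ∂_X Ã) = Q⁻¹ ∂_Y (A⁻¹ ∂_X A) Q`. The B-field transformation is the case
`P = I − N(conj γ)`, `Q = I + N(γ)`. -/

open scoped Topology Ring ComplexConjugate

section ComplexDirDeriv

variable {E F F' 𝔸 : Type*} [NormedAddCommGroup E] [NormedSpace ℝ E]
  [NormedAddCommGroup F] [NormedSpace ℂ F] [NormedAddCommGroup F'] [NormedSpace ℂ F']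
  [NormedRing 𝔸] [NormedAlgebra ℂ 𝔸] {X Y : E × E} {z : E}

/-- The derivative `∂f/∂u + i·∂f/∂v` of `f` along the complexified tangent vector `u + i v`, which
is encoded as the pair `X = (u, v)`. Both Wirtinger derivatives are of this form. -/
def complexDirDeriv (X : E × E) (f : E → F) (z : E) : F :=
  fderiv ℝ f z X.1 + Complex.I • fderiv ℝ f z X.2

/-- The complex conjugate `u - i v` of the complexified tangent vector `X = u + i v`. -/
def conjDir (X : E × E) : E × E :=
  (X.1, -X.2)

theorem complexDirDeriv_congr {f g : E → F} (h : f =ᶠ[𝓝 z] g) :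
    complexDirDeriv X f z = complexDirDeriv X g z := by
  simp only [complexDirDeriv, h.fderiv_eq]

theorem complexDirDeriv_const (c : F) : complexDirDeriv X (fun _ : E => c) z = 0 := by
  simp [complexDirDeriv]

theorem complexDirDeriv_const_add (c : F) (f : E → F) :
    complexDirDeriv X (fun w => c + f w) z = complexDirDeriv X f z := by
  simp only [complexDirDeriv, fderiv_const_add]

theorem complexDirDeriv_const_sub (c : F) (f : E → F) :
    complexDirDeriv X (fun w => c - f w) z = -complexDirDeriv X f z := by
  simp only [complexDirDeriv, fderiv_const_sub, _root_.neg_apply, smul_neg, neg_add]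

theorem complexDirDeriv_add {f g : E → F} (hf : DifferentiableAt ℝ f z)
    (hg : DifferentiableAt ℝ g z) :
    complexDirDeriv X (fun w => f w + g w) z = complexDirDeriv X f z + complexDirDeriv X g z := by
  simp only [complexDirDeriv, fderiv_fun_add hf hg, _root_.add_apply, smul_add]
  abel

theorem complexDirDeriv_mul {f g : E → 𝔸} (hf : DifferentiableAt ℝ f z)
    (hg : DifferentiableAt ℝ g z) :
    complexDirDeriv X (fun w => f w * g w) z =
      complexDirDeriv X f z * g z + f z * complexDirDeriv X g z := by
  simp only [complexDirDeriv, fderiv_fun_mul' hf hg, _root_.add_apply, _root_.smul_apply,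
    smul_eq_mul, MulOpposite.smul_eq_mul_unop, MulOpposite.unop_op, smul_add, add_mul, mul_add,
    smul_mul_assoc, mul_smul_comm]
  abel

theorem complexDirDeriv_clm_comp (L : F →L[ℂ] F') {f : E → F} (hf : DifferentiableAt ℝ f z) :
    complexDirDeriv X (fun w => L (f w)) z = L (complexDirDeriv X f z) := by
  have hL : fderiv ℝ (fun w => L (f w)) z = (L.restrictScalars ℝ).comp (fderiv ℝ f z) :=
    (L.restrictScalars ℝ).hasFDerivAt.comp z hf.hasFDerivAt |>.fderiv
  simp [complexDirDeriv, hL]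

theorem complexDirDeriv_conj (f : E → ℂ) :
    complexDirDeriv X (fun w => conj (f w)) z = conj (complexDirDeriv (conjDir X) f z) := by
  have hconj : fderiv ℝ (fun w => conj (f w)) z =
      (Complex.conjCLE : ℂ →L[ℝ] ℂ).comp (fderiv ℝ f z) := Complex.conjCLE.comp_fderiv
  simp [complexDirDeriv, conjDir, hconj]

theorem hasFDerivAt_complexDirDeriv {f : E → F} (hf : ContDiffAt ℝ 2 f z) :
    HasFDerivAt (complexDirDeriv X f) ((fderiv ℝ (fderiv ℝ f) z).flip X.1 +
      Complex.I • (fderiv ℝ (fderiv ℝ f) z).flip X.2) z := by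
  have hf' : HasFDerivAt (fderiv ℝ f) (fderiv ℝ (fderiv ℝ f) z) z :=
    ((hf.fderiv_right (m := 1) (by norm_num)).differentiableAt one_ne_zero).hasFDerivAt
  have heval (u : E) :
      HasFDerivAt (fun w => fderiv ℝ f w u) ((fderiv ℝ (fderiv ℝ f) z).flip u) z := by
    simpa using hf'.clm_apply (hasFDerivAt_const u z)
  exact (heval X.1).add ((heval X.2).const_smul Complex.I)

theorem complexDirDeriv_comm {f : E → F} (hf : ContDiffAt ℝ 2 f z) :
    complexDirDeriv Y (complexDirDeriv X f) z = complexDirDeriv X (complexDirDeriv Y f) z := by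
  have hsymm : IsSymmSndFDerivAt ℝ f z := hf.isSymmSndFDerivAt (by simp)
  rw [complexDirDeriv, complexDirDeriv, (hasFDerivAt_complexDirDeriv hf).fderiv,
    (hasFDerivAt_complexDirDeriv hf).fderiv]
  simp only [_root_.add_apply, _root_.smul_apply, ContinuousLinearMap.flip_apply, smul_add,
    hsymm Y.1, hsymm Y.2]
  abel

theorem complexDirDeriv_complexDirDeriv_eq_zero {f : E → F} (hf : ContDiffAt ℝ 2 f z)
    (hYf : ∀ᶠ w in 𝓝 z, complexDirDeriv Y f w = 0) :
    complexDirDeriv Y (complexDirDeriv X f) z = 0 := by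
  rw [complexDirDeriv_comm hf, complexDirDeriv_congr hYf, complexDirDeriv_const]

end ComplexDirDeriv

section ChernCurvature

variable {E 𝔸 : Type*} [NormedAddCommGroup E] [NormedSpace ℝ E]
  [NormedRing 𝔸] [NormedAlgebra ℂ 𝔸] {X Y : E × E} {z : E}
  {P A Q : E → 𝔸}

/-- The logarithmic derivative `A⁻¹·∂_X A`: the Chern connection matrix of the metric `A` when `X`
is of type `(1, 0)`. -/
def logComplexDirDeriv (X : E × E) (A : E → 𝔸) (z : E) : 𝔸 :=
  (A z)⁻¹ʳ * complexDirDeriv X A z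

theorem logComplexDirDeriv_mul_mul (hP : DifferentiableAt ℝ P z) (hA : DifferentiableAt ℝ A z)
    (hQ : DifferentiableAt ℝ Q z) (hPz : IsUnit (P z)) (hAz : IsUnit (A z))
    (hXP : complexDirDeriv X P z = 0) :
    logComplexDirDeriv X (fun w => P w * A w * Q w) z =
      (Q z)⁻¹ʳ * logComplexDirDeriv X A z * Q z + logComplexDirDeriv X Q z := by
  simp only [logComplexDirDeriv]
  rw [complexDirDeriv_mul (hP.fun_mul hA) hQ, complexDirDeriv_mul hP hA, hXP, zero_mul, zero_add,
    Ring.inverse_mul (.inl (hPz.mul hAz)), Ring.inverse_mul (.inl hPz), mul_add]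
  simp only [mul_assoc, Ring.inverse_mul_cancel_left _ _ hPz,
    Ring.inverse_mul_cancel_left _ _ hAz]

variable [HasSummableGeomSeries 𝔸]

theorem eventually_isUnit {E R : Type*} [TopologicalSpace E] [NormedRing R]
    [HasSummableGeomSeries R] {A : E → R} {z : E} (hA : ContinuousAt A z) (hAz : IsUnit (A z)) :
    ∀ᶠ w in 𝓝 z, IsUnit (A w) :=
  hA.eventually (Units.isOpen.mem_nhds hAz)

theorem complexDirDeriv_inverse_eq_zero (hQ : DifferentiableAt ℝ Q z) (hQz : IsUnit (Q z))
    (hYQ : complexDirDeriv Y Q z = 0) : complexDirDeriv Y (fun w => (Q w)⁻¹ʳ) z = 0 := by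
  have hinv : (fun w => (Q w)⁻¹ʳ * Q w) =ᶠ[𝓝 z] fun _ => 1 :=
    (eventually_isUnit hQ.continuousAt hQz).mono fun w => Ring.inverse_mul_cancel (Q w)
  have hleibniz := complexDirDeriv_congr (X := Y) hinv
  rw [complexDirDeriv_mul (hQ.inverse hQz) hQ, hYQ, mul_zero, add_zero,
    complexDirDeriv_const] at hleibniz
  exact hQz.mul_left_eq_zero.mp hleibniz

theorem differentiableAt_logComplexDirDeriv (hA : ContDiffAt ℝ 2 A z) (hAz : IsUnit (A z)) :
    DifferentiableAt ℝ (logComplexDirDeriv X A) z :=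
  ((hA.differentiableAt two_ne_zero).inverse hAz).mul
    (hasFDerivAt_complexDirDeriv hA).differentiableAt

theorem complexDirDeriv_logComplexDirDeriv_eq_zero (hQ : ContDiffAt ℝ 2 Q z) (hQz : IsUnit (Q z))
    (hYQ : ∀ᶠ w in 𝓝 z, complexDirDeriv Y Q w = 0) :
    complexDirDeriv Y (logComplexDirDeriv X Q) z = 0 := by
  have hQ' : DifferentiableAt ℝ Q z := hQ.differentiableAt two_ne_zero
  unfold logComplexDirDeriv
  rw [complexDirDeriv_mul (hQ'.inverse hQz) (hasFDerivAt_complexDirDeriv hQ).differentiableAt,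
    complexDirDeriv_inverse_eq_zero hQ' hQz hYQ.self_of_nhds,
    complexDirDeriv_complexDirDeriv_eq_zero hQ hYQ, zero_mul, mul_zero, add_zero]

theorem complexDirDeriv_inverse_mul_mul {θ : E → 𝔸} (hQ : DifferentiableAt ℝ Q z)
    (hQz : IsUnit (Q z)) (hθ : DifferentiableAt ℝ θ z) (hYQ : complexDirDeriv Y Q z = 0) :
    complexDirDeriv Y (fun w => (Q w)⁻¹ʳ * θ w * Q w) z =
      (Q z)⁻¹ʳ * complexDirDeriv Y θ z * Q z := by
  rw [complexDirDeriv_mul ((hQ.inverse hQz).fun_mul hθ) hQ, complexDirDeriv_mul (hQ.inverse hQz) hθ,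
    complexDirDeriv_inverse_eq_zero hQ hQz hYQ, hYQ, zero_mul, zero_add, mul_zero, add_zero]

theorem complexDirDeriv_logComplexDirDeriv_mul_mul
    (hP : ContDiffAt ℝ 1 P z) (hA : ContDiffAt ℝ 2 A z) (hQ : ContDiffAt ℝ 2 Q z)
    (hPz : IsUnit (P z)) (hAz : IsUnit (A z)) (hQz : IsUnit (Q z))
    (hXP : ∀ᶠ w in 𝓝 z, complexDirDeriv X P w = 0)
    (hYQ : ∀ᶠ w in 𝓝 z, complexDirDeriv Y Q w = 0) :
    complexDirDeriv Y (logComplexDirDeriv X fun w => P w * A w * Q w) z =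
      (Q z)⁻¹ʳ * complexDirDeriv Y (logComplexDirDeriv X A) z * Q z := by
  have hlog : logComplexDirDeriv X (fun w => P w * A w * Q w) =ᶠ[𝓝 z] fun w =>
      (Q w)⁻¹ʳ * logComplexDirDeriv X A w * Q w + logComplexDirDeriv X Q w := by
    filter_upwards [hP.eventually (by simp), hA.eventually (by simp), hQ.eventually (by simp),
      eventually_isUnit hP.continuousAt hPz, eventually_isUnit hA.continuousAt hAz, hXP]
      with w hPw hAw hQw hPu hAu hXPw
    exact logComplexDirDeriv_mul_mul (hPw.differentiableAt one_ne_zero)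
      (hAw.differentiableAt two_ne_zero) (hQw.differentiableAt two_ne_zero) hPu hAu hXPw
  have hQ' : DifferentiableAt ℝ Q z := hQ.differentiableAt two_ne_zero
  have hθ : DifferentiableAt ℝ (logComplexDirDeriv X A) z :=
    differentiableAt_logComplexDirDeriv hA hAz
  rw [complexDirDeriv_congr hlog,
    complexDirDeriv_add (((hQ'.inverse hQz).fun_mul hθ).fun_mul hQ')
      (differentiableAt_logComplexDirDeriv hQ hQz),
    complexDirDeriv_inverse_mul_mul hQ' hQz hθ hYQ.self_of_nhds,
    complexDirDeriv_logComplexDirDeriv_eq_zero hQ hQz hYQ, add_zero]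

end ChernCurvature

section LowerLeftBlock

variable {R ι κ : Type*}

/-- The block matrix `[[0, 0], [γ, 0]]` of a rectangular `γ`, extending `Nmat`. -/
def lowerLeftBlock [Zero R] (γ : Matrix κ ι R) : Matrix (ι ⊕ κ) (ι ⊕ κ) R :=
  fromBlocks 0 0 γ 0

variable [Ring R] [Fintype ι] [Fintype κ]

theorem lowerLeftBlock_mul_self (γ : Matrix κ ι R) : lowerLeftBlock γ * lowerLeftBlock γ = 0 := by
  simp [lowerLeftBlock, fromBlocks_multiply]

variable [DecidableEq ι] [DecidableEq κ]

theorem one_sub_lowerLeftBlock_mul_one_add (γ : Matrix κ ι R) :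
    (1 - lowerLeftBlock γ) * (1 + lowerLeftBlock γ) = 1 := by
  simp [sub_mul, mul_add, lowerLeftBlock_mul_self]

theorem one_add_lowerLeftBlock_mul_one_sub (γ : Matrix κ ι R) :
    (1 + lowerLeftBlock γ) * (1 - lowerLeftBlock γ) = 1 := by
  simp [add_mul, mul_sub, lowerLeftBlock_mul_self]

theorem isUnit_one_add_lowerLeftBlock (γ : Matrix κ ι R) : IsUnit (1 + lowerLeftBlock γ) :=
  ⟨⟨_, _, one_add_lowerLeftBlock_mul_one_sub γ, one_sub_lowerLeftBlock_mul_one_add γ⟩, rfl⟩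

theorem isUnit_one_sub_lowerLeftBlock (γ : Matrix κ ι R) : IsUnit (1 - lowerLeftBlock γ) :=
  ⟨⟨_, _, one_sub_lowerLeftBlock_mul_one_add γ, one_add_lowerLeftBlock_mul_one_sub γ⟩, rfl⟩

end LowerLeftBlock

section Matrix

open scoped Matrix.Norms.Operator

variable {E ι κ : Type*} [NormedAddCommGroup E] [NormedSpace ℝ E] [Fintype ι] [Fintype κ]
  {X : E × E} {z : E}

theorem contDiffAt_matrix_of_apply {k : WithTop ℕ∞} {A : E → Matrix ι κ ℂ}
    (hA : ∀ a b, ContDiffAt ℝ k (fun w => A w a b) z) : ContDiffAt ℝ k A z :=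
  (Matrix.ofLinearEquiv ℝ : (ι → κ → ℂ) ≃ₗ[ℝ] Matrix ι κ ℂ).toContinuousLinearEquiv.contDiff
    |>.contDiffAt.comp z (contDiffAt_pi.mpr fun a => contDiffAt_pi.mpr (hA a))

theorem complexDirDeriv_matrix_apply {A : E → Matrix ι κ ℂ} (hA : DifferentiableAt ℝ A z)
    (a : ι) (b : κ) : complexDirDeriv X A z a b = complexDirDeriv X (fun w => A w a b) z :=
  (complexDirDeriv_clm_comp (Matrix.entryLinearMap ℂ ℂ a b).toContinuousLinearMap hA).symm

theorem contDiffAt_lowerLeftBlock {k : WithTop ℕ∞} {γ : E → Matrix κ ι ℂ}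
    (hγ : ∀ a b, ContDiffAt ℝ k (fun w => γ w a b) z) :
    ContDiffAt ℝ k (fun w => lowerLeftBlock (γ w)) z := by
  refine contDiffAt_matrix_of_apply ?_
  rintro (_ | a) (b | _)
  case inr.inl => exact hγ a b
  all_goals exact contDiffAt_const

theorem complexDirDeriv_lowerLeftBlock_eq_zero {γ : E → Matrix κ ι ℂ}
    (hγ : ∀ a b, ContDiffAt ℝ 1 (fun w => γ w a b) z)
    (hXγ : ∀ a b, complexDirDeriv X (fun w => γ w a b) z = 0) :
    complexDirDeriv X (fun w => lowerLeftBlock (γ w)) z = 0 := by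
  have hN := (contDiffAt_lowerLeftBlock hγ).differentiableAt one_ne_zero
  ext A B
  rw [complexDirDeriv_matrix_apply hN]
  rcases A with _ | a <;> rcases B with b | _
  case inr.inl => exact hXγ a b
  all_goals exact complexDirDeriv_const 0

end Matrix

section Wirtinger

open scoped Matrix.Norms.Operator

variable {n : ℕ} {ι κ : Type*} [Fintype ι] [Fintype κ] {z : Fin n → ℂ}

/-- The complexified tangent vector `½(∂/∂xᵢ - i·∂/∂yᵢ)`. -/
def wirtingerDir (i : Fin n) : (Fin n → ℂ) × (Fin n → ℂ) :=
  (Pi.single i (1 / 2), -Pi.single i (Complex.I / 2))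

theorem fderiv_single_half (f : (Fin n → ℂ) → ℂ) (i : Fin n) (c : ℂ) :
    fderiv ℝ f z (Pi.single i (c / 2)) = fderiv ℝ f z (Pi.single i c) / 2 := by
  have hsingle : (Pi.single i (c / 2) : Fin n → ℂ) = (2⁻¹ : ℝ) • Pi.single i c := by
    rw [← Pi.single_smul, Complex.real_smul, Complex.ofReal_inv, Complex.ofReal_ofNat,
      div_eq_inv_mul]
  rw [hsingle, map_smul, Complex.real_smul, Complex.ofReal_inv, Complex.ofReal_ofNat,
    div_eq_inv_mul]

theorem wd_eq_complexDirDeriv (i : Fin n) (f : (Fin n → ℂ) → ℂ) :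
    wd i f z = complexDirDeriv (wirtingerDir i) f z := by
  simp only [wd, complexDirDeriv, wirtingerDir, map_neg, fderiv_single_half, smul_eq_mul]
  ring

theorem wdb_eq_complexDirDeriv (i : Fin n) (f : (Fin n → ℂ) → ℂ) :
    wdb i f z = complexDirDeriv (conjDir (wirtingerDir i)) f z := by
  simp only [wdb, complexDirDeriv, conjDir, wirtingerDir, neg_neg, fderiv_single_half, smul_eq_mul]
  ring

theorem wdM_eq_complexDirDeriv (i : Fin n) {A : (Fin n → ℂ) → Matrix ι κ ℂ}
    (hA : DifferentiableAt ℝ A z) : wdM i A z = complexDirDeriv (wirtingerDir i) A z := by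
  ext a b
  rw [complexDirDeriv_matrix_apply hA, ← wd_eq_complexDirDeriv]
  rfl

theorem wdbM_eq_complexDirDeriv (i : Fin n) {A : (Fin n → ℂ) → Matrix ι κ ℂ}
    (hA : DifferentiableAt ℝ A z) :
    wdbM i A z = complexDirDeriv (conjDir (wirtingerDir i)) A z := by
  ext a b
  rw [complexDirDeriv_matrix_apply hA, ← wdb_eq_complexDirDeriv]
  rfl

variable [DecidableEq ι] [DecidableEq κ]

/-- The Chern curvature endomorphism `Ω_{ij̄} = -∂_{j̄}(A⁻¹·∂ᵢA)` of the metric `A`. -/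
def chernEndo (i j : Fin n) (A : (Fin n → ℂ) → Matrix ι ι ℂ) (z : Fin n → ℂ) : Matrix ι ι ℂ :=
  -(wdbM j (fun w => (A w)⁻¹ * wdM i A w) z)

theorem chernEndo_eq_complexDirDeriv (i j : Fin n) {A : (Fin n → ℂ) → Matrix ι ι ℂ}
    (hA : ContDiffAt ℝ 2 A z) (hAz : IsUnit (A z)) :
    chernEndo i j A z = -complexDirDeriv (conjDir (wirtingerDir j))
      (logComplexDirDeriv (wirtingerDir i) A) z := by
  have hlog : (fun w => (A w)⁻¹ * wdM i A w) =ᶠ[𝓝 z] logComplexDirDeriv (wirtingerDir i) A :=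
    (hA.eventually (by simp)).mono fun w hw => by
      simp only [logComplexDirDeriv, wdM_eq_complexDirDeriv i (hw.differentiableAt two_ne_zero),
        nonsing_inv_eq_ringInverse]
  rw [chernEndo, wdbM_eq_complexDirDeriv j
      ((differentiableAt_logComplexDirDeriv hA hAz).congr_of_eventuallyEq hlog),
    complexDirDeriv_congr hlog]

theorem chernEndo_mul_mul (i j : Fin n) {P A Q : (Fin n → ℂ) → Matrix ι ι ℂ}
    (hP : ContDiffAt ℝ 2 P z) (hA : ContDiffAt ℝ 2 A z) (hQ : ContDiffAt ℝ 2 Q z)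
    (hPz : IsUnit (P z)) (hAz : IsUnit (A z)) (hQz : IsUnit (Q z))
    (hXP : ∀ᶠ w in 𝓝 z, complexDirDeriv (wirtingerDir i) P w = 0)
    (hYQ : ∀ᶠ w in 𝓝 z, complexDirDeriv (conjDir (wirtingerDir j)) Q w = 0) :
    chernEndo i j (fun w => P w * A w * Q w) z = (Q z)⁻¹ * chernEndo i j A z * Q z := by
  rw [chernEndo_eq_complexDirDeriv i j ((hP.mul hA).mul hQ) ((hPz.mul hAz).mul hQz),
    chernEndo_eq_complexDirDeriv i j hA hAz,
    complexDirDeriv_logComplexDirDeriv_mul_mul (hP.of_le one_le_two) hA hQ hPz hAz hQz hXP hYQ,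
    nonsing_inv_eq_ringInverse, mul_neg, neg_mul]

/-- The B-field transform `(I - N(conj γ))·G·(I + N(γ))` of the metric `G`. -/
def bFieldTransform (γ : (Fin n → ℂ) → Matrix κ ι ℂ)
    (G : (Fin n → ℂ) → Matrix (ι ⊕ κ) (ι ⊕ κ) ℂ) (w : Fin n → ℂ) :
    Matrix (ι ⊕ κ) (ι ⊕ κ) ℂ :=
  (1 - lowerLeftBlock ((γ w).map (starRingEnd ℂ))) * G w * (1 + lowerLeftBlock (γ w))

theorem chernEndo_bFieldTransform {U : Set (Fin n → ℂ)} (hU : IsOpen U)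
    {γ : (Fin n → ℂ) → Matrix κ ι ℂ} {G : (Fin n → ℂ) → Matrix (ι ⊕ κ) (ι ⊕ κ) ℂ}
    (hγC2 : ∀ a b, ContDiffOn ℝ 2 (fun z => γ z a b) U)
    (hγhol : ∀ z ∈ U, ∀ j a b, wdb j (fun w => γ w a b) z = 0)
    (hG : ∀ a b, ContDiffAt ℝ 2 (fun z => G z a b) z) (hGz : IsUnit (G z)) (hz : z ∈ U)
    (i j : Fin n) :
    chernEndo i j (bFieldTransform γ G) z =
      (1 - lowerLeftBlock (γ z)) * chernEndo i j G z * (1 + lowerLeftBlock (γ z)) := by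
  have hγ (w) (hw : w ∈ U) (a b) : ContDiffAt ℝ 2 (fun v => γ v a b) w :=
    (hγC2 a b).contDiffAt (hU.mem_nhds hw)
  have hγconj (w) (hw : w ∈ U) (a b) : ContDiffAt ℝ 2 (fun v => (γ v).map (starRingEnd ℂ) a b) w :=
    Complex.conjCLE.contDiff.contDiffAt.comp w (hγ w hw a b)
  have hP : ∀ᶠ w in 𝓝 z, complexDirDeriv (wirtingerDir i)
      (fun v => 1 - lowerLeftBlock ((γ v).map (starRingEnd ℂ))) w = 0 := by
    filter_upwards [hU.mem_nhds hz] with w hw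
    rw [complexDirDeriv_const_sub, complexDirDeriv_lowerLeftBlock_eq_zero
      fun a b => (hγconj w hw a b).of_le one_le_two, neg_zero]
    intro a b
    simp only [map_apply, complexDirDeriv_conj, ← wdb_eq_complexDirDeriv, hγhol w hw, map_zero]
  have hQ : ∀ᶠ w in 𝓝 z, complexDirDeriv (conjDir (wirtingerDir j))
      (fun v => 1 + lowerLeftBlock (γ v)) w = 0 := by
    filter_upwards [hU.mem_nhds hz] with w hw
    rw [complexDirDeriv_const_add, complexDirDeriv_lowerLeftBlock_eq_zero
      fun a b => (hγ w hw a b).of_le one_le_two]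
    intro a b
    rw [← wdb_eq_complexDirDeriv, hγhol w hw]
  rw [← Matrix.inv_eq_left_inv (one_sub_lowerLeftBlock_mul_one_add (γ z))]
  exact chernEndo_mul_mul i j (contDiffAt_const.sub (contDiffAt_lowerLeftBlock (hγconj z hz)))
    (contDiffAt_matrix_of_apply hG) (contDiffAt_const.add (contDiffAt_lowerLeftBlock (hγ z hz)))
    (isUnit_one_sub_lowerLeftBlock _) hGz (isUnit_one_add_lowerLeftBlock _) hP hQ

end Wirtinger

theorem chernEndo_bField_general {n : ℕ} {ι κ : Type*} [Fintype ι] [Fintype κ] [DecidableEq ι]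
    [DecidableEq κ] {U : Set (Fin n → ℂ)} (hU : IsOpen U)
    {γ : (Fin n → ℂ) → Matrix κ ι ℂ} {G : (Fin n → ℂ) → Matrix (ι ⊕ κ) (ι ⊕ κ) ℂ}
    (hγC2 : ∀ a b, ContDiffOn ℝ 2 (fun z => γ z a b) U)
    (hγhol : ∀ z ∈ U, ∀ j a b, wdb j (fun w => γ w a b) z = 0)
    (hGC2 : ∀ a b, ContDiffOn ℝ 2 (fun z => G z a b) U) (hGinv : ∀ z ∈ U, IsUnit (G z)) :
    (∀ z ∈ U, ∀ i j, chernEndo i j (bFieldTransform γ G) z =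
      (1 - lowerLeftBlock (γ z)) * chernEndo i j G z * (1 + lowerLeftBlock (γ z))) ∧
    (∀ c : Matrix (Fin n) (Fin n) ℂ, ∀ z ∈ U,
      ∑ i, ∑ j, c j i • chernEndo i j (bFieldTransform γ G) z =
        (1 - lowerLeftBlock (γ z)) * (∑ i, ∑ j, c j i • chernEndo i j G z) *
          (1 + lowerLeftBlock (γ z))) := by
  have hendo (z) (hz : z ∈ U) := chernEndo_bFieldTransform hU hγC2 hγhol
    (fun a b => (hGC2 a b).contDiffAt (hU.mem_nhds hz)) (hGinv z hz) hz
  refine ⟨hendo, fun c z hz => ?_⟩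
  simp only [hendo z hz, Finset.mul_sum, Finset.sum_mul, Matrix.mul_smul, Matrix.smul_mul]

/-- if `γ` is holomorphic then the Chern curvature endomorphisms
`Ω_{ij̄} = −∂_{j̄}(G⁻¹·∂ᵢG)` transform by conjugation under the B-field transformation
`G̃ = (I − N(conj γ))·G·(I + N(γ))`, and consequently so do the curvatures traced with
respect to any Hermitian positive-definite `g`. -/
theorem chernEndo_bField {n : ℕ} (hn : 0 < n)
    (U : Set (Fin n → ℂ)) (hU : IsOpen U)
    (γ : (Fin n → ℂ) → Matrix (Fin n) (Fin n) ℂ)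
    (G : (Fin n → ℂ) → Matrix (Fin n ⊕ Fin n) (Fin n ⊕ Fin n) ℂ)
    (hγC2 : ∀ a b : Fin n, ContDiffOn ℝ 2 (fun z => γ z a b) U)
    (hγhol : ∀ z ∈ U, ∀ j : Fin n, ∀ a b : Fin n, wdb j (fun w => γ w a b) z = 0)
    (hGC2 : ∀ A B : Fin n ⊕ Fin n, ContDiffOn ℝ 2 (fun z => G z A B) U)
    (hGinv : ∀ z ∈ U, IsUnit (G z)) :
    (∀ z ∈ U, ∀ i j : Fin n,
      -(wdbM j (fun w =>
            ((1 - Nmat ((γ w).map (starRingEnd ℂ))) * G w * (1 + Nmat (γ w)))⁻¹ *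
              wdM i (fun v => (1 - Nmat ((γ v).map (starRingEnd ℂ))) * G v * (1 + Nmat (γ v))) w) z) =
        (1 - Nmat (γ z)) * (-(wdbM j (fun w => (G w)⁻¹ * wdM i G w) z)) * (1 + Nmat (γ z))) ∧
    (∀ g : (Fin n → ℂ) → Matrix (Fin n) (Fin n) ℂ, (∀ z ∈ U, (g z).PosDef) →
      ∀ z ∈ U,
        (∑ i : Fin n, ∑ j : Fin n, (g z)⁻¹ j i •
            -(wdbM j (fun w =>
                ((1 - Nmat ((γ w).map (starRingEnd ℂ))) * G w * (1 + Nmat (γ w)))⁻¹ *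
                  wdM i (fun v => (1 - Nmat ((γ v).map (starRingEnd ℂ))) * G v * (1 + Nmat (γ v))) w) z)) =
          (1 - Nmat (γ z)) *
            (∑ i : Fin n, ∑ j : Fin n, (g z)⁻¹ j i •
              -(wdbM j (fun w => (G w)⁻¹ * wdM i G w) z)) * (1 + Nmat (γ z))) := by
  have h := chernEndo_bField_general hU hγC2 hγhol hGC2 hGinv
  exact ⟨h.1, fun g _ z => h.2 (g z)⁻¹ z⟩
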